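/- arXiv:2505.13410 — 2 statements merged into one kernel-verified Lean document; each statement's English description precedes it below -/
import Mathlib

section
/- Let d ≥ 1, let Σ be a d×d real positive semidefinite matrix, and let δ > 0. If tr(Σ) ≥ d·δ, then tr(Σ²·(Σ + δI)⁻¹) ≥ tr(Σ)/6, where I is the d×d identity matrix (note that Σ + δI is positive definite, hence invertible). -/
/-!
The scalar inequality behind the estimate is the tangent line bound at `x = δ`,
`x² / (x + δ) ≥ (3x - δ) / 4`, whose defect is exactly `(x - δ)² / (4 (x + δ))`.
Written for matrices this is an identity that needs no diagonalization: with `M = S + δI`,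
`S² M⁻¹ = (3/4) S - (δ/4) I + (1/4) (S - δI)² M⁻¹`, and the trace of the last term equals that of
the positive semidefinite matrix `(S - δI) M⁻¹ (S - δI)`. Taking traces,
`tr(S² M⁻¹) ≥ (3/4) tr S - dδ/4 ≥ (1/2) tr S`, which is stronger than the bound by `tr S / 6`.
-/

open Matrix

/-- Let `d ≥ 1`, let `S` be a `d×d` real positive semidefinite matrix, and let `δ > 0`.
If `tr(S) ≥ d·δ`, then `tr(S² (S + δI)⁻¹) ≥ tr(S)/6`. -/
theorem trace_sq_mul_inv_add_smul_one_ge_trace_div_six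
    (d : ℕ) (hd : 1 ≤ d) (S : Matrix (Fin d) (Fin d) ℝ) (hS : S.PosSemidef)
    (δ : ℝ) (hδ : 0 < δ) (htr : (d : ℝ) * δ ≤ S.trace) :
    S.trace / 6 ≤ (S ^ 2 * (S + δ • (1 : Matrix (Fin d) (Fin d) ℝ))⁻¹).trace := by
  have hM : (S + δ • (1 : Matrix (Fin d) (Fin d) ℝ)).PosDef :=
    PosDef.posSemidef_add hS (PosDef.one.smul hδ)
  have hMinv : (S + δ • (1 : Matrix (Fin d) (Fin d) ℝ)) *
      (S + δ • (1 : Matrix (Fin d) (Fin d) ℝ))⁻¹ = 1 :=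
    mul_nonsing_inv _ ((isUnit_iff_isUnit_det _).1 hM.isUnit)
  have hpos := hM.inv.posSemidef
  set N := (S + δ • (1 : Matrix (Fin d) (Fin d) ℝ))⁻¹
  have hD : (S - δ • (1 : Matrix (Fin d) (Fin d) ℝ))ᴴ = S - δ • 1 := by
    rw [conjTranspose_sub, hS.isHermitian.eq, conjTranspose_smul, conjTranspose_one, star_trivial]
  have hdefect : 0 ≤ ((S - δ • 1) * (S - δ • 1) * N).trace := by
    have h := (hpos.conjTranspose_mul_mul_same (S - δ • 1)).trace_nonneg
    rwa [hD, trace_mul_comm, ← mul_assoc] at h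
  have hid : (4 : ℝ) • (S ^ 2 * N) =
      (3 : ℝ) • S - δ • 1 + (S - δ • 1) * (S - δ • 1) * N := by
    -- The factor `3S - δI` is multiplied by `M N = 1` to put every term over `N`.
    have h : (3 : ℝ) • S - δ • 1 = ((3 : ℝ) • S - δ • 1) * ((S + δ • 1) * N) := by
      rw [hMinv, mul_one]
    rw [h, ← mul_assoc, ← add_mul, ← smul_mul_assoc]
    congr 1
    simp only [sub_mul, mul_sub, mul_add, smul_mul_assoc, mul_smul_comm, mul_one, one_mul, pow_two]
    module
  have htrace := congrArg trace hid
  simp only [trace_smul, trace_add, trace_sub, trace_one, Fintype.card_fin, smul_eq_mul] at htrace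
  have : 0 ≤ (d : ℝ) * δ := by positivity
  linarith
end

section
/- Let c > 0 and q ∈ (0, 1), and let u : [0, ∞) → ℝ be differentiable with u(t) ≥ 0 for all t ≥ 0 and u′(t) ≤ −c·u(t)^q for all t ≥ 0 (real power, with 0^q = 0). Then u(t) = 0 for every t ≥ u(0)^{1−q} / (c·(1−q)). -/
/-!
As `u` is nonincreasing on `[0,∞)`, if `u t > 0` then `u > 0` on all of `[0,t]`, where
`u ^ (1 - q)` is differentiable with derivative `(1 - q) u ^ (-q) u' ≤ -c (1 - q)`. Hence
`0 < u t ^ (1 - q) ≤ u 0 ^ (1 - q) - c (1 - q) t`, so `t` lies strictly before the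
claimed extinction time.
-/

/-- Finite-time extinction for a sublinear differential inequality:
if `u ≥ 0` on `[0,∞)` and `u′(t) ≤ −c·u(t)^q` for all `t ≥ 0`
(with `c > 0`, `q ∈ (0,1)`, real powers, `0^q = 0`), then `u(t) = 0`
for every `t ≥ u(0)^{1−q} / (c (1−q))`. -/
theorem finite_time_extinction_sublinear
    (c q : ℝ) (hc : 0 < c) (hq0 : 0 < q) (hq1 : q < 1) (u : ℝ → ℝ)
    (hdiff : ∀ t, 0 ≤ t → DifferentiableAt ℝ u t)
    (hnn : ∀ t, 0 ≤ t → 0 ≤ u t)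
    (hderiv : ∀ t, 0 ≤ t → deriv u t ≤ -c * u t ^ q) :
    ∀ t, u 0 ^ (1 - q) / (c * (1 - q)) ≤ t → u t = 0 := by
  intro t ht
  have hq : 0 < 1 - q := by linarith
  have hcq : 0 < c * (1 - q) := mul_pos hc hq
  have ht0 : 0 ≤ t :=
    (div_nonneg (Real.rpow_nonneg (hnn 0 le_rfl) _) hcq.le).trans ht
  by_contra hne
  have hpos : 0 < u t := lt_of_le_of_ne (hnn t ht0) (Ne.symm hne)
  have hanti : AntitoneOn u (Set.Ici 0) := by
    refine antitoneOn_of_deriv_nonpos (convex_Ici 0)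
      (fun x hx => (hdiff x hx).continuousAt.continuousWithinAt)
      (fun x hx => (hdiff x (interior_subset hx)).differentiableWithinAt) fun x hx => ?_
    have hx0 : 0 ≤ x := interior_subset hx
    have h := mul_nonneg hc.le (Real.rpow_nonneg (hnn x hx0) q)
    linarith [hderiv x hx0]
  have hup : ∀ x ∈ Set.Icc 0 t, 0 < u x := fun x hx =>
    hpos.trans_le (hanti hx.1 ht0 hx.2)
  have hv : ∀ x ∈ Set.Icc 0 t, HasDerivAt (fun s => u s ^ (1 - q) + c * (1 - q) * s)
      (deriv u x * (1 - q) * u x ^ (1 - q - 1) + c * (1 - q) * 1) x := fun x hx =>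
    ((hdiff x hx.1).hasDerivAt.rpow_const (Or.inl (hup x hx).ne')).add
      ((hasDerivAt_id x).const_mul _)
  have hva : AntitoneOn (fun s => u s ^ (1 - q) + c * (1 - q) * s) (Set.Icc 0 t) := by
    refine antitoneOn_of_deriv_nonpos (convex_Icc 0 t)
      (fun x hx => (hv x hx).continuousAt.continuousWithinAt)
      (fun x hx => (hv x (interior_subset hx)).differentiableAt.differentiableWithinAt)
      fun x hx => ?_
    have hx' : x ∈ Set.Icc 0 t := interior_subset hx
    rw [(hv x hx').deriv]
    have hcancel : u x ^ q * u x ^ (1 - q - 1) = 1 := by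
      rw [← Real.rpow_add (hup x hx')]
      simp
    have hw : 0 ≤ (1 - q) * u x ^ (1 - q - 1) :=
      mul_nonneg hq.le (Real.rpow_nonneg (hup x hx').le _)
    have h := mul_le_mul_of_nonneg_right (hderiv x hx'.1) hw
    linear_combination h - c * (1 - q) * hcancel
  have h := hva ⟨le_rfl, ht0⟩ ⟨ht0, le_rfl⟩ ht0
  have h1 := Real.rpow_pos_of_pos hpos (1 - q)
  rw [div_le_iff₀ hcq] at ht
  simp only [mul_zero, add_zero] at h
  linarith
end
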